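/- arXiv:1004.0046 — 4 statements merged into one kernel-verified Lean document; each statement's English description precedes it below -/
import Mathlib

section
/- There exist no rational numbers a, b, t satisfying simultaneously: 3 = 9a²t² + 108abt + 756b², −3 = 54at + 756b, and t²/36 = 9at² + 54bt. -/
/-!
Intersecting `[P] = a λ² + b c₂(X)` with itself and with `c₂(X)` already determines `(a t)²`: the
Gram determinant of the pair `([P], c₂(X))` is `a²` times that of `(λ², c₂(X))`. The first is
`3 · 756 - (-3)² = 3 · 753`, the second is `(9 · 756 - 54²) t² = 3 · 36² t²`, so
`753 = (36 a t)²`, while `753` lies strictly between `27²` and `28²`.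
-/

/-- For a symmetric bilinear form with `⟨u, u⟩ = p`, `⟨u, v⟩ = q`, `⟨v, v⟩ = r`, the left side is
the Gram determinant of `(s u + b v, v)`. -/
theorem gram_det_linear_combination {R : Type*} [CommRing R] (p q r s b : R) :
    (p * s ^ 2 + 2 * q * s * b + r * b ^ 2) * r - (q * s + r * b) ^ 2 =
      s ^ 2 * (p * r - q ^ 2) := by
  ring

theorem isSquare_753_of_self_eq_of_chern_eq {R : Type*} [CommRing R] [NoZeroDivisors R] {s b : R}
    (self_eq : 3 = 9 * s ^ 2 + 108 * s * b + 756 * b ^ 2)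
    (chern_eq : -3 = 54 * s + 756 * b) : IsSquare (753 : R) := by
  have gram_eq : (3 * 756 - (-3) ^ 2 : R) = s ^ 2 * (9 * 756 - 54 ^ 2) :=
    calc (3 * 756 - (-3) ^ 2 : R)
        = (9 * s ^ 2 + 108 * s * b + 756 * b ^ 2) * 756 - (54 * s + 756 * b) ^ 2 := by
          rw [← self_eq, ← chern_eq]
      _ = s ^ 2 * (9 * 756 - 54 ^ 2) := by
          linear_combination gram_det_linear_combination 9 54 756 s b
  have three_mul_eq : (3 : R) * 753 = 3 * (36 * s) ^ 2 := by linear_combination gram_eq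
  by_cases three_eq_zero : (3 : R) = 0
  · have eq_zero : (753 : R) = 0 := by linear_combination 251 * three_eq_zero
    exact eq_zero ▸ IsSquare.zero
  · exact mul_left_cancel₀ three_eq_zero three_mul_eq ▸ IsSquare.sq (36 * s)

theorem stmt_4_general {R : Type*} [CommRing R] [NoZeroDivisors R] (h : ¬ IsSquare (753 : R)) :
    ¬ ∃ a b t : R,
      3 = 9 * a ^ 2 * t ^ 2 + 108 * a * b * t + 756 * b ^ 2 ∧
      -3 = 54 * a * t + 756 * b := by
  rintro ⟨a, b, t, self_eq, chern_eq⟩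
  refine h (isSquare_753_of_self_eq_of_chern_eq (s := a * t) (b := b) ?_ ?_)
  · linear_combination self_eq
  · linear_combination chern_eq

/-- There are no rational numbers `a, b, t` satisfying simultaneously
`3 = 9a²t² + 108abt + 756b²`, `−3 = 54at + 756b`, and `t²/36 = 9at² + 54bt`. -/
theorem stmt_4 :
    ¬ ∃ a b t : ℚ,
      3 = 9 * a ^ 2 * t ^ 2 + 108 * a * b * t + 756 * b ^ 2 ∧
      -3 = 54 * a * t + 756 * b ∧
      t ^ 2 / 36 = 9 * a * t ^ 2 + 54 * b * t := by
  rintro ⟨a, b, t, self_eq, chern_eq, -⟩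
  exact stmt_4_general (by norm_num) ⟨a, b, t, self_eq, chern_eq⟩
end

section
/- For every integer t, if 2⁴·3⁵ = 3888 divides 49t² + 756t − 976860 (where 976860 = 2²·3⁶·5·67), then t ≡ 2 (mod 4) and 27 divides t. -/
theorem prime_pow_succ_dvd_of_pow_dvd_pow {M : Type*} [CommMonoidWithZero M]
    [IsCancelMulZero M] {p x : M} (hp : Prime p) {k m n : ℕ} (hmk : m * k < n)
    (h : p ^ n ∣ x ^ m) : p ^ (k + 1) ∣ x := by
  by_contra hx
  have hxk : emultiplicity p x ≤ k := Order.le_of_lt_add_one (emultiplicity_lt_iff_not_dvd.mpr hx)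
  have hnk : (n : ℕ∞) ≤ (m * k : ℕ) := calc
    (n : ℕ∞) ≤ emultiplicity p (x ^ m) := le_emultiplicity_of_pow_dvd h
    _ = m * emultiplicity p x := emultiplicity_pow hp
    _ ≤ m * k := by gcongr
    _ = (m * k : ℕ) := by norm_cast
  exact hmk.not_ge (by exact_mod_cast hnk)

/-- For every integer `t`, if `2⁴·3⁵ = 3888` divides `49t² + 756t − 976860`, then
`t ≡ 2 (mod 4)` and `27 ∣ t`. -/
theorem stmt_8 (t : ℤ) (h : (3888 : ℤ) ∣ 49 * t ^ 2 + 756 * t - 976860) :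
    t ≡ 2 [ZMOD 4] ∧ (27 : ℤ) ∣ t := by
  have square_completed :
      49 * t ^ 2 + 756 * t - 976860 = (7 * t + 54) ^ 2 - 3888 * 252 := by ring
  have hsq : (3888 : ℤ) ∣ (7 * t + 54) ^ 2 := by
    rwa [square_completed, dvd_sub_left (dvd_mul_right _ _)] at h
  have four_dvd : (2 : ℤ) ^ 2 ∣ 7 * t + 54 :=
    prime_pow_succ_dvd_of_pow_dvd_pow Int.prime_two (n := 4) (m := 2) (by norm_num)
      (dvd_trans (by norm_num) hsq)
  have twentySeven_dvd : (3 : ℤ) ^ 3 ∣ 7 * t + 54 :=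
    prime_pow_succ_dvd_of_pow_dvd_pow Int.prime_three (n := 5) (m := 2) (by norm_num)
      (dvd_trans (by norm_num) hsq)
  constructor
  · rw [Int.modEq_iff_dvd]
    omega
  · omega
end

section
/- Let q be an odd prime power, V a four-dimensional vector space over the finite field F_q equipped with a nondegenerate alternating bilinear form B, and Λ ⊆ V a subset with exactly q² elements. Suppose that for every two-dimensional linear subspace W ⊆ V on which B does not vanish identically, the function V → ℤ/qℤ, τ ↦ #(Λ ∩ (W + τ)) (mod q), is constant. Then Λ is a coset of some two-dimensional linear subspace of V, i.e. there exist a two-dimensional subspace W₀ ⊆ V and v ∈ V with Λ = v + W₀. -/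
/-!
Let `W` be a plane spanned by a nonzero difference `d` of two points of `Λ` and a vector `w`. There
are at least as many cosets of `W` as points of `Λ`, and two points of `Λ` share a coset, so some
coset misses `Λ`. Hence, if the coset counts are constant mod `q`, they are all divisible by `q`,
and for `x ∈ Λ` the coset `x + W` contains at least `q` points of `Λ`.

Suppose that a point of the line `x + ⟨d⟩` is missing from `Λ`. Then one of these `q` points lies
off that line, and it determines `w` up to scaling and modulo `⟨d⟩`. So on an affine hyperplane that
is parallel to `d` and avoids the origin, at most `(|Λ| - 1) q` vectors `w` span such a plane with
`d`. If all of its `|V| / q ≥ |Λ| q` vectors do, this is a contradiction. Therefore `Λ` contains the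
line through each of its points in each direction `d`, that is, `Λ` is an affine subspace.

For the planes on which `B` does not vanish, the hyperplane can be `B d w = 1` if `B d d = 0`, and
any hyperplane parallel to `d` otherwise.
-/

lemma ncard_fiber_mul_natCard {G H : Type*} [AddGroup G] [AddGroup H] {f : G →+ H}
    (hf : Function.Surjective f) (c : H) : {g | f g = c}.ncard * Nat.card H = Nat.card G := by
  rw [← f.ker.card_mul_index, AddSubgroup.index_ker, AddMonoidHom.range_eq_top.2 hf,
    AddSubgroup.card_top]
  congr 1
  exact Nat.card_congr (f.fiberEquivKerOfSurjective hf c)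

section Ring

variable {R M : Type*} [Ring R] [AddCommGroup M] [Module R M] {Λ : Set M} {W : Submodule R M}

lemma ncard_setOf_sub_mem (W : Submodule R M) (v : M) :
    {x | x - v ∈ W}.ncard = Nat.card W :=
  Nat.card_congr ((Equiv.subRight v).subtypeEquiv fun _ ↦ Iff.rfl)

lemma exists_inter_coset_eq_empty (hfin : Λ.Finite) (hcard : Λ.ncard ≤ Nat.card (M ⧸ W))
    {y z : M} (hy : y ∈ Λ) (hz : z ∈ Λ) (hne : y ≠ z) (hW : y - z ∈ W) :
    ∃ τ, Λ ∩ {v | v - τ ∈ W} = ∅ := by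
  by_contra! hmeet
  have himage : W.mkQ '' Λ = Set.univ := by
    refine Set.eq_univ_of_forall fun c ↦ ?_
    obtain ⟨τ, rfl⟩ := W.mkQ_surjective c
    obtain ⟨v, hv, hvτ⟩ := hmeet τ
    exact ⟨v, hv, (Submodule.Quotient.eq W).2 hvτ⟩
  have hinj : Set.InjOn W.mkQ Λ := by
    refine Set.injOn_of_ncard_image_eq (le_antisymm (Set.ncard_image_le hfin) ?_) hfin
    rwa [himage, Set.ncard_univ]
  exact hne (hinj hy hz ((Submodule.Quotient.eq W).2 hW))

/-- The cosets of `W` all contain the same number of points of `Λ` modulo `m`. Infinite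
intersections count as empty, by the convention for `Set.ncard`. -/
def EquidistributedMod (m : ℕ) (Λ : Set M) (W : Submodule R M) : Prop :=
  ∀ τ₁ τ₂ : M, ((Λ ∩ {v | v - τ₁ ∈ W}).ncard : ZMod m) = ((Λ ∩ {v | v - τ₂ ∈ W}).ncard : ZMod m)

lemma EquidistributedMod.dvd_ncard_of_inter_eq_empty {m : ℕ} (h : EquidistributedMod m Λ W)
    {τ : M} (hτ : Λ ∩ {v | v - τ ∈ W} = ∅) (x : M) : m ∣ (Λ ∩ {v | v - x ∈ W}).ncard := by
  rw [← ZMod.natCast_eq_zero_iff, h x τ, hτ, Set.ncard_empty, Nat.cast_zero]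

lemma EquidistributedMod.le_ncard_inter_coset {m : ℕ} (h : EquidistributedMod m Λ W)
    (hfin : Λ.Finite) (hcard : Λ.ncard ≤ Nat.card (M ⧸ W)) {x y z : M} (hx : x ∈ Λ) (hy : y ∈ Λ)
    (hz : z ∈ Λ) (hne : y ≠ z) (hW : y - z ∈ W) : m ≤ (Λ ∩ {v | v - x ∈ W}).ncard := by
  obtain ⟨τ, hτ⟩ := exists_inter_coset_eq_empty hfin hcard hy hz hne hW
  have hpos : 0 < (Λ ∩ {v | v - x ∈ W}).ncard :=
    (Set.ncard_pos (hfin.inter_of_left _)).2 ⟨x, hx, by simp⟩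
  exact Nat.le_of_dvd hpos (h.dvd_ncard_of_inter_eq_empty hτ x)

lemma natCard_span_pair_le [Finite R] (d w : M) :
    Nat.card (Submodule.span R {d, w}) ≤ Nat.card R ^ 2 := by
  let combination (p : R × R) : Submodule.span R {d, w} :=
    ⟨p.1 • d + p.2 • w, Submodule.mem_span_pair.2 ⟨p.1, p.2, rfl⟩⟩
  have hsurj : Function.Surjective combination := by
    rintro ⟨v, hv⟩
    obtain ⟨a, b, rfl⟩ := Submodule.mem_span_pair.1 hv
    exact ⟨(a, b), rfl⟩
  simpa only [Nat.card_prod, sq] using Nat.card_le_card_of_surjective combination hsurj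

lemma natCard_le_natCard_quotient_span_pair_mul [Finite R] (d w : M) :
    Nat.card M ≤ Nat.card (M ⧸ Submodule.span R {d, w}) * Nat.card R ^ 2 := by
  rw [Submodule.card_eq_card_quotient_mul_card (Submodule.span R {d, w}), mul_comm]
  exact Nat.mul_le_mul_left _ (natCard_span_pair_le d w)

lemma exists_mem_sub_eq_smul_add_smul [Finite R] {d w x : M} {t : R} (ht : x + t • d ∉ Λ)
    (hcard : Nat.card R ≤ (Λ ∩ {v | v - x ∈ Submodule.span R {d, w}}).ncard) :
    ∃ y ∈ Λ, ∃ a b : R, b ≠ 0 ∧ y - x = a • d + b • w := by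
  by_contra! hline
  have hsub : Λ ∩ {v | v - x ∈ Submodule.span R {d, w}} ⊆ (fun a : R ↦ x + a • d) '' {t}ᶜ := by
    rintro y ⟨hy, hyW⟩
    obtain ⟨a, b, hab⟩ := Submodule.mem_span_pair.1 hyW
    obtain rfl : b = 0 := by_contra fun hb ↦ hline y hy a b hb hab.symm
    have hya : x + a • d = y := by
      rw [← add_sub_cancel x y, ← hab, zero_smul, add_zero]
    exact ⟨a, fun hat ↦ ht (hat ▸ hya ▸ hy), hya⟩
  have hlt : ({t}ᶜ : Set R).ncard < Nat.card R := by
    rw [← Set.ncard_univ]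
    exact Set.ncard_lt_ncard (Set.ssubset_univ_iff.2 (by simp))
  have hle := (Set.ncard_le_ncard hsub).trans (Set.ncard_image_le (Set.toFinite _))
  exact (hcard.trans hle).not_gt hlt

end Ring

section Field

variable {F V : Type*} [Field F] [AddCommGroup V] [Module F V] {Λ : Set V} {φ : Module.Dual F V}
  {d : V}

lemma finrank_span_pair_eq_two {w : V} (hd : d ≠ 0) (hφd : φ d = 0) (hφw : φ w = 1) :
    Module.finrank F (Submodule.span F {d, w}) = 2 := by
  have hli : LinearIndependent F ![d, w] := by
    refine (LinearIndependent.pair_iff' hd).2 fun a haw ↦ ?_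
    simp [← haw, hφd] at hφw
  rw [← Matrix.range_cons_cons_empty, finrank_span_eq_card hli, Fintype.card_fin]

lemma ncard_setOf_apply_eq_one_le [Finite F] {x : V} (hfin : Λ.Finite) (hφd : φ d = 0)
    (hΛ : ∀ w, φ w = 1 → ∃ y ∈ Λ, ∃ a b : F, b ≠ 0 ∧ y - x = a • d + b • w) :
    {w | φ w = 1}.ncard ≤ (Λ \ {x}).ncard * Nat.card F := by
  let vectorOf (p : V × F) : V := (φ (p.1 - x))⁻¹ • (p.1 - x) + p.2 • d
  have hsub : {w | φ w = 1} ⊆ vectorOf '' ((Λ \ {x}) ×ˢ Set.univ) := by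
    intro w (hw : φ w = 1)
    obtain ⟨y, hy, a, b, hb, hyx⟩ := hΛ w hw
    have hφy : φ (y - x) = b := by simp [hyx, hφd, hw]
    refine ⟨(y, -(b⁻¹ * a)), ⟨⟨hy, ?_⟩, trivial⟩, ?_⟩
    · rintro rfl
      exact hb (by simpa using hφy.symm)
    · simp only [vectorOf, hφy]
      rw [hyx, smul_add, smul_smul, inv_smul_smul₀ hb, neg_smul]
      abel
  have hfin' : ((Λ \ {x}) ×ˢ (Set.univ : Set F)).Finite := hfin.sdiff.prod Set.finite_univ
  calc {w | φ w = 1}.ncard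
      ≤ (vectorOf '' ((Λ \ {x}) ×ˢ Set.univ)).ncard := Set.ncard_le_ncard hsub (hfin'.image _)
    _ ≤ ((Λ \ {x}) ×ˢ (Set.univ : Set F)).ncard := Set.ncard_image_le hfin'
    _ = (Λ \ {x}).ncard * Nat.card F := by rw [Set.ncard_prod, Set.ncard_univ]

lemma add_smul_sub_mem_of_equidistributedMod [Finite F] [Finite V]
    (hcard : Λ.ncard * Nat.card F ^ 2 ≤ Nat.card V) {x y z : V} (hx : x ∈ Λ) (hy : y ∈ Λ)
    (hz : z ∈ Λ) (hne : y ≠ z) (hφ : φ ≠ 0) (hφd : φ (y - z) = 0)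
    (hΛ : ∀ w, φ w = 1 → EquidistributedMod (Nat.card F) Λ (Submodule.span F {y - z, w})) (t : F) :
    x + t • (y - z) ∈ Λ := by
  have hq : 0 < Nat.card F := Nat.card_pos
  by_contra ht
  have hoff : ∀ w, φ w = 1 → ∃ y' ∈ Λ, ∃ a b : F, b ≠ 0 ∧ y' - x = a • (y - z) + b • w := by
    intro w hw
    have hquot : Λ.ncard ≤ Nat.card (V ⧸ Submodule.span F {y - z, w}) :=
      Nat.le_of_mul_le_mul_right
        (hcard.trans (natCard_le_natCard_quotient_span_pair_mul (y - z) w)) (pow_pos hq 2)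
    have hle := (hΛ w hw).le_ncard_inter_coset Λ.toFinite hquot hx hy hz hne
      (Submodule.subset_span (Set.mem_insert _ _))
    exact exists_mem_sub_eq_smul_add_smul ht hle
  have hlt : (Λ \ {x}).ncard < Λ.ncard := Set.ncard_sdiff_singleton_lt_of_mem hx
  have : Nat.card V < Nat.card V := calc
    Nat.card V = {w | φ w = 1}.ncard * Nat.card F :=
      (ncard_fiber_mul_natCard (f := φ.toAddMonoidHom) (LinearMap.surjective hφ) 1).symm
    _ ≤ (Λ \ {x}).ncard * Nat.card F * Nat.card F := by
      gcongr
      exact ncard_setOf_apply_eq_one_le Λ.toFinite hφd hoff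
    _ < Λ.ncard * Nat.card F * Nat.card F := by gcongr
    _ = Λ.ncard * Nat.card F ^ 2 := by ring
    _ ≤ Nat.card V := hcard
  exact this.false

theorem exists_affineSubspace_coe_eq [Finite F] [Finite V]
    (hcard : Λ.ncard * Nat.card F ^ 2 ≤ Nat.card V)
    (hΛ : ∀ d : V, d ≠ 0 → ∃ φ : Module.Dual F V, φ ≠ 0 ∧ φ d = 0 ∧
      ∀ w, φ w = 1 → EquidistributedMod (Nat.card F) Λ (Submodule.span F {d, w})) :
    ∃ S : AffineSubspace F V, (S : Set V) = Λ := by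
  refine ⟨⟨Λ, fun t y z x hy hz hx ↦ ?_⟩, rfl⟩
  rw [vsub_eq_sub, vadd_eq_add, add_comm]
  obtain rfl | hne := eq_or_ne y z
  · simpa using hx
  · obtain ⟨φ, hφ, hφd, hφΛ⟩ := hΛ (y - z) (sub_ne_zero.2 hne)
    exact add_smul_sub_mem_of_equidistributedMod hcard hx hy hz hne hφ hφd hφΛ t

lemma exists_dual_forall_span_pair_not_isotropic (hdim : 2 ≤ Module.finrank F V)
    {B : LinearMap.BilinForm F V} (hB : B.SeparatingLeft) (hd : d ≠ 0) :
    ∃ φ : Module.Dual F V, φ ≠ 0 ∧ φ d = 0 ∧ ∀ w, φ w = 1 →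
      ∃ x ∈ Submodule.span F {d, w}, ∃ y ∈ Submodule.span F {d, w}, B x y ≠ 0 := by
  have hd_mem (w : V) : d ∈ Submodule.span F {d, w} := Submodule.subset_span (by simp)
  have hw_mem (w : V) : w ∈ Submodule.span F {d, w} := Submodule.subset_span (by simp)
  by_cases hBd : B d d = 0
  · refine ⟨B d, fun h ↦ hd (hB d fun y ↦ by simp [h]), hBd, fun w hw ↦ ?_⟩
    exact ⟨d, hd_mem w, w, hw_mem w, by simp [hw]⟩
  · have hlt : Submodule.span F {d} < ⊤ := by
      refine lt_top_iff_ne_top.2 fun htop ↦ ?_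
      have := finrank_span_singleton (K := F) hd
      rw [htop, finrank_top] at this
      omega
    obtain ⟨φ, hφ, hle⟩ := Submodule.exists_le_ker_of_lt_top _ hlt
    refine ⟨φ, hφ, hle (Submodule.mem_span_singleton_self d), fun w _ ↦ ?_⟩
    exact ⟨d, hd_mem w, d, hd_mem w, hBd⟩

end Field

theorem stmt_12_general {F V : Type*} [Field F] [Fintype F] [AddCommGroup V] [Module F V] {n : ℕ}
    (hV : Module.finrank F V = n + 2)
    (B : LinearMap.BilinForm F V)
    (hB : B.SeparatingLeft)
    (Λ : Set V) (hΛ : Λ.ncard = Fintype.card F ^ n)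
    (hconst : ∀ W : Submodule F V, Module.finrank F W = 2 →
      (∃ x ∈ W, ∃ y ∈ W, B x y ≠ 0) → EquidistributedMod (Fintype.card F) Λ W) :
    ∃ W₀ : Submodule F V, Module.finrank F W₀ = n ∧
      ∃ v : V, Λ = {x : V | x - v ∈ W₀} := by
  have : FiniteDimensional F V := Module.finite_of_finrank_pos (by omega)
  have : Finite V := Module.finite_of_finite F
  simp only [Fintype.card_eq_nat_card] at hΛ hconst
  obtain ⟨S, rfl⟩ : ∃ S : AffineSubspace F V, (S : Set V) = Λ := by
    refine exists_affineSubspace_coe_eq ?_ fun d hd ↦ ?_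
    · rw [hΛ, Module.natCard_eq_pow_finrank (K := F) (V := V), hV, pow_add]
    · obtain ⟨φ, hφ, hφd, hφB⟩ :=
        exists_dual_forall_span_pair_not_isotropic (by omega) hB hd
      exact ⟨φ, hφ, hφd, fun w hw ↦ hconst _ (finrank_span_pair_eq_two hd hφd hw) (hφB w hw)⟩
  obtain ⟨v, hv⟩ : (S : Set V).Nonempty :=
    Set.nonempty_of_ncard_ne_zero (hΛ ▸ pow_ne_zero n Nat.card_pos.ne')
  have hS : (S : Set V) = {x | x - v ∈ S.direction} :=
    Set.ext fun x ↦ (AffineSubspace.vsub_right_mem_direction_iff_mem hv x).symm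
  refine ⟨S.direction, ?_, v, hS⟩
  rw [hS, ncard_setOf_sub_mem, Module.natCard_eq_pow_finrank (K := F)] at hΛ
  exact Nat.pow_right_injective Finite.one_lt_card hΛ

/-- Let `q` be an odd prime power (`q = |F|` for a finite field `F`), `V` a four-dimensional
`F`-vector space with a nondegenerate alternating bilinear form `B`, and `Λ ⊆ V` a subset
with exactly `q²` elements. If for every two-dimensional subspace `W ⊆ V` on which `B` does
not vanish identically, the function `τ ↦ #(Λ ∩ (W + τ)) (mod q)` is constant, then `Λ` is a
coset of a two-dimensional linear subspace of `V`. -/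
theorem stmt_12 {F V : Type*} [Field F] [Fintype F]
    [AddCommGroup V] [Module F V] [FiniteDimensional F V]
    (hq : Odd (Fintype.card F))
    (hV : Module.finrank F V = 4)
    (B : LinearMap.BilinForm F V)
    (halt : ∀ v : V, B v v = 0)
    (hnd : B.Nondegenerate)
    (Λ : Set V) (hΛ : Λ.ncard = Fintype.card F ^ 2)
    (hconst : ∀ W : Submodule F V, Module.finrank F W = 2 →
      (∃ x ∈ W, ∃ y ∈ W, B x y ≠ 0) →
      ∀ τ₁ τ₂ : V,
        ((Λ ∩ {v | v - τ₁ ∈ W}).ncard : ZMod (Fintype.card F)) =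
        ((Λ ∩ {v | v - τ₂ ∈ W}).ncard : ZMod (Fintype.card F))) :
    ∃ W₀ : Submodule F V, Module.finrank F W₀ = 2 ∧
      ∃ v : V, Λ = {x : V | x - v ∈ W₀} := by
  exact stmt_12_general hV B hnd.1 Λ hΛ hconst
end

section
/- Let V = (ℤ/3ℤ)⁴ with standard basis e₁, e₂, e₃, e₄, and let S = {e₂, e₂+e₁, e₂−e₁, e₃, e₃+e₁, e₃−e₁, e₄, e₄+e₁, e₄−e₁} (a set of nine elements). Then: (1) for every τ ∈ V and every ε ∈ {+1, −1}, the cardinality of S ∩ {ε·x + τ : x ∈ S} is divisible by 3; and (2) S is not a coset of a two-dimensional subspace of V, i.e. there is no two-dimensional linear subspace W ⊆ V and v ∈ V with S = v + W. -/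
/-!
Let `S` be a union of lines parallel to `d`. It is stable under translation by the line `K ∙ d`,
and so is each image `ε • S + τ` with `ε ≠ 0`, because `ε • x + τ + l = ε • (x + ε⁻¹ • l) + τ`.
The intersection of the two is therefore a disjoint union of cosets of `K ∙ d`, and its size is a
multiple of `|K|`.

On a coset of a subspace a linear functional is either constant or surjective. If the lines pass
through `e i`, `i ≠ o`, and have direction `e o`, where `e` is linearly independent, then the `i`-th
coordinate takes on `S` the values `0` and `1` and no others, so `S` is not a coset when `K` has
more than two elements.
-/

open scoped Pointwise in
theorem natCard_dvd_ncard_of_add_mem {G : Type*} [AddGroup G] (H : AddSubgroup G) {T : Set G}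
    (hT : ∀ x ∈ T, ∀ h ∈ H, x + h ∈ T) : Nat.card H ∣ T.ncard := by
  have hTH : T + (H : Set G) = T :=
    (Set.add_subset_iff.2 hT).antisymm (Set.subset_add_left T H.zero_mem)
  rw [← Nat.card_coe_set_eq, ← hTH, H.card_add_eq_card_addSubgroup_add_card_quotient]
  exact dvd_mul_right _ _

section Module

variable {R M : Type*} [Ring R] [AddCommGroup M] [Module R M]

theorem add_mem_image_units_smul_add {L : Submodule R M} {T : Set M}
    (hT : ∀ x ∈ T, ∀ l ∈ L, x + l ∈ T) (ε : Rˣ) (τ : M) :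
    ∀ y ∈ (fun x => ε • x + τ) '' T, ∀ l ∈ L, y + l ∈ (fun x => ε • x + τ) '' T := by
  rintro _ ⟨x, hx, rfl⟩ l hl
  refine ⟨x + ε⁻¹ • l, hT x hx _ (L.smul_mem _ hl), ?_⟩
  simp only [smul_add, smul_inv_smul]
  abel

theorem natCard_dvd_ncard_inter_image_units_smul_add {L : Submodule R M} {T : Set M}
    (hT : ∀ x ∈ T, ∀ l ∈ L, x + l ∈ T) (ε : Rˣ) (τ : M) :
    Nat.card L ∣ (T ∩ (fun x => ε • x + τ) '' T).ncard :=
  natCard_dvd_ncard_of_add_mem L.toAddSubgroup fun x hx l hl =>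
    ⟨hT x hx.1 l hl, add_mem_image_units_smul_add hT ε τ x hx.2 l hl⟩

theorem natCard_span_singleton [IsDomain R] [Module.IsTorsionFree R M] {d : M} (hd : d ≠ 0) :
    Nat.card (Submodule.span R {d}) = Nat.card R :=
  Nat.card_congr (LinearEquiv.toSpanNonzeroSingleton R M d hd).symm.toEquiv

end Module

section DivisionRing

variable {K V : Type*} [DivisionRing K] [AddCommGroup V] [Module K V]

theorem image_affineSubspace_eq_univ_of_ne (φ : V →ₗ[K] K) {P : AffineSubspace K V} {x y : V}
    (hx : x ∈ P) (hy : y ∈ P) (hxy : φ x ≠ φ y) : φ '' P = Set.univ := by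
  refine Set.eq_univ_of_forall fun c => ?_
  have hne : φ y - φ x ≠ 0 := sub_ne_zero.2 hxy.symm
  refine ⟨AffineMap.lineMap x y ((c - φ x) / (φ y - φ x)), AffineMap.lineMap_mem _ hx hy, ?_⟩
  simp [AffineMap.lineMap_apply, hne]

theorem exists_linearMap_apply_eq_one_and_eq_zero {ι : Type*} {e : ι → V}
    (he : LinearIndependent K e) (i : ι) :
    ∃ φ : V →ₗ[K] K, φ (e i) = 1 ∧ ∀ j ≠ i, φ (e j) = 0 := by
  obtain ⟨g, hg⟩ := (Finsupp.linearCombination K e).exists_leftInverse_of_injective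
    (LinearMap.ker_eq_bot.2 he)
  have hge (j : ι) : g (e j) = Finsupp.single j 1 := by
    simpa using LinearMap.congr_fun hg (Finsupp.single j 1)
  refine ⟨Finsupp.lapply i ∘ₗ g, ?_, fun j hj => ?_⟩
  · simp [hge]
  · simp [hge, hj]

end DivisionRing

section ParallelLines

variable {K V ι : Type*} [Semiring K] [AddCommMonoid V] [Module K V]

variable (K) in
/-- The union of the parallel lines `e i + K ∙ e o`, one for each index `i ≠ o`. The direction is a
member of the family so that a single linear independence hypothesis covers it and the base
points. -/
def parallelLines (e : ι → V) (o : ι) : Set V :=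
  {x | ∃ i ≠ o, ∃ c : K, e i + c • e o = x}

theorem add_mem_parallelLines {e : ι → V} {o : ι} :
    ∀ x ∈ parallelLines K e o, ∀ l ∈ Submodule.span K {e o}, x + l ∈ parallelLines K e o := by
  rintro _ ⟨i, hi, c, rfl⟩ l hl
  obtain ⟨a, rfl⟩ := Submodule.mem_span_singleton.1 hl
  exact ⟨i, hi, c + a, by rw [add_smul, add_assoc]⟩

theorem apply_mem_parallelLines (e : ι → V) {o i : ι} (hi : i ≠ o) : e i ∈ parallelLines K e o :=
  ⟨i, hi, 0, by simp⟩

end ParallelLines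

theorem parallelLines_ne_affineSubspace {K V ι : Type*} [DivisionRing K] [AddCommGroup V]
    [Module K V] (hK : 2 < ENat.card K) {e : ι → V} (he : LinearIndependent K e) {o i j : ι}
    (hi : i ≠ o) (hj : j ≠ o) (hij : i ≠ j) (P : AffineSubspace K V) :
    parallelLines K e o ≠ P := by
  intro hP
  obtain ⟨φ, hφi, hφ⟩ := exists_linearMap_apply_eq_one_and_eq_zero he i
  have hsub : φ '' parallelLines K e o ⊆ {0, 1} := by
    rintro _ ⟨_, ⟨k, -, c, rfl⟩, rfl⟩
    rcases eq_or_ne k i with rfl | hk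
    · simp [hφi, hφ o hi.symm]
    · simp [hφ k hk, hφ o hi.symm]
  have huniv : φ '' parallelLines K e o = Set.univ := by
    rw [hP]
    refine image_affineSubspace_eq_univ_of_ne φ (x := e i) (y := e j) ?_ ?_ ?_
    · exact hP.subset (apply_mem_parallelLines e hi)
    · exact hP.subset (apply_mem_parallelLines e hj)
    · simp [hφi, hφ j hij.symm]
  have hcard : ENat.card K ≤ 2 := calc
    ENat.card K = (φ '' parallelLines K e o).encard := by rw [huniv, Set.encard_univ]
    _ ≤ ({0, 1} : Set K).encard := Set.encard_le_encard hsub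
    _ = 2 := Set.encard_pair zero_ne_one
  exact hK.not_ge hcard

theorem coe_finset_eq_parallelLines_zmod_three {V : Type*} [AddCommGroup V] [Module (ZMod 3) V]
    [DecidableEq V] (e : Fin 4 → V) :
    (({e 1, e 1 + e 0, e 1 - e 0, e 2, e 2 + e 0, e 2 - e 0,
      e 3, e 3 + e 0, e 3 - e 0} : Finset V) : Set V) = parallelLines (ZMod 3) e 0 := by
  have hline (i : Fin 4) (x : V) :
      (∃ c : ZMod 3, e i + c • e 0 = x) ↔ x = e i ∨ x = e i + e 0 ∨ x = e i - e 0 := by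
    have hc : ∀ c : ZMod 3, c = 0 ∨ c = 1 ∨ c = -1 := by decide
    constructor
    · rintro ⟨c, rfl⟩
      rcases hc c with rfl | rfl | rfl <;> simp [sub_eq_add_neg]
    · rintro (rfl | rfl | rfl)
      · exact ⟨0, by simp⟩
      · exact ⟨1, by simp⟩
      · exact ⟨-1, by simp [sub_eq_add_neg]⟩
  ext x
  simp [parallelLines, hline, Fin.exists_fin_succ, or_assoc]

theorem stmt_15_general {K V ι : Type*} [DivisionRing K] [AddCommGroup V] [Module K V]
    (hK : 2 < Nat.card K) (hι : 2 < Nat.card ι) {e : ι → V} (he : LinearIndependent K e) (o : ι) :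
    (∀ τ : V, ∀ ε : K, ε ≠ 0 →
      Nat.card K ∣ (parallelLines K e o ∩ (fun x => ε • x + τ) '' parallelLines K e o).ncard) ∧
    ∀ P : AffineSubspace K V, parallelLines K e o ≠ P := by
  have : Finite K := Nat.finite_of_card_ne_zero (by omega)
  have : Finite ι := Nat.finite_of_card_ne_zero (by omega)
  refine ⟨fun τ ε hε => ?_, fun P => ?_⟩
  · rw [← natCard_span_singleton (R := K) (he.ne_zero o)]
    exact natCard_dvd_ncard_inter_image_units_smul_add add_mem_parallelLines (Units.mk0 ε hε) τ
  · have hlines : 1 < ({o}ᶜ : Set ι).ncard := by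
      rw [Set.ncard_compl, Set.ncard_singleton]
      omega
    obtain ⟨i, hi, j, hj, hij⟩ := Set.one_lt_ncard_iff_nontrivial.1 hlines
    have hK' : 2 < ENat.card K := by
      rw [ENat.card_eq_coe_natCard]
      exact_mod_cast hK
    exact parallelLines_ne_affineSubspace hK' he hi hj hij P

/-- In `V = (ℤ/3ℤ)⁴` with standard basis `e₁, …, e₄`, the nine-element set
`S = {e₂, e₂±e₁, e₃, e₃±e₁, e₄, e₄±e₁}` satisfies: (1) for every `τ ∈ V` and `ε = ±1`, the
cardinality of `S ∩ {ε·x + τ : x ∈ S}` is divisible by 3; and (2) `S` is not a coset of a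
two-dimensional subspace of `V`. -/
theorem stmt_15
    (e : Fin 4 → (Fin 4 → ZMod 3)) (he : ∀ i, e i = Pi.single i 1)
    (S : Finset (Fin 4 → ZMod 3))
    (hS : S = {e 1, e 1 + e 0, e 1 - e 0, e 2, e 2 + e 0, e 2 - e 0,
               e 3, e 3 + e 0, e 3 - e 0}) :
    (∀ τ : Fin 4 → ZMod 3, ∀ ε : ZMod 3, (ε = 1 ∨ ε = -1) →
      3 ∣ (S ∩ S.image fun x => ε • x + τ).card) ∧
    ¬ ∃ W : Submodule (ZMod 3) (Fin 4 → ZMod 3), Module.finrank (ZMod 3) W = 2 ∧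
      ∃ v : Fin 4 → ZMod 3, (S : Set (Fin 4 → ZMod 3)) = {x | x - v ∈ W} := by
  have hlines : (S : Set (Fin 4 → ZMod 3)) = parallelLines (ZMod 3) e 0 := by
    rw [hS, coe_finset_eq_parallelLines_zmod_three]
  have hind : LinearIndependent (ZMod 3) e := by
    rw [funext he]
    exact Pi.linearIndependent_single_one (Fin 4) (ZMod 3)
  obtain ⟨hdvd, hcoset⟩ := stmt_15_general (by simp) (by simp) hind 0
  simp only [← hlines, Nat.card_zmod] at hdvd hcoset
  refine ⟨fun τ ε hε => ?_, ?_⟩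
  · have hε₀ : ε ≠ 0 := by rcases hε with rfl | rfl <;> decide
    rw [← Set.ncard_coe_finset, Finset.coe_inter, Finset.coe_image]
    exact hdvd τ ε hε₀
  · rintro ⟨W, -, v, hW⟩
    refine hcoset (AffineSubspace.mk' v W) ?_
    ext x
    rw [hW, Set.mem_ofPred_eq, SetLike.mem_coe, AffineSubspace.mem_mk', vsub_eq_sub]
end
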